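/- Let L = {<} ∪ {c_n | n < ω} and let T = Th(ℚ, <, (n)_{n<ω}), where c_n is interpreted as the natural number n. In a sufficiently saturated model M̄ of T, let a < b be elements with c_n < a for all n < ω. Then: tp(a) = tp(b); tp(b/a) is isolated; tp(a/b) is not isolated; neither tp(a/b) nor tp(b/a) forks over ∅; and for any elements a′, b′, c′ of M̄ with tp(a′,b′) = tp(b′,c′) = tp(a,b), the type tp(b′/a′c′) forks over ∅. -/

import Mathlib

open FirstOrder Cardinal

namespace KimPaper

/-- A first-order formula in `n` free variables together with a tuple of
parameters from `M`. -/
def FP (L : FirstOrder.Language.{0, 0}) (M : Type) (n : ℕ) : Type :=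
  Σ k : ℕ, L.Formula (Fin n ⊕ Fin k) × (Fin k → M)

/-- Realization of a formula-with-parameters by a tuple. -/
def FP.Realize {L : FirstOrder.Language.{0, 0}} {M : Type} [L.Structure M] {n : ℕ}
    (F : FP L M n) (a : Fin n → M) : Prop :=
  F.2.1.Realize (Sum.elim a F.2.2)

/-- All parameters of the formula-with-parameters `F` lie in the set `A`. -/
def FP.ParamsIn {L : FirstOrder.Language.{0, 0}} {M : Type} {n : ℕ}
    (F : FP L M n) (A : Set M) : Prop :=
  ∀ i, F.2.2 i ∈ A

/-- The tuples `a` and `b` have the same complete type over the set `A`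
(i.e. `tp(a/A) = tp(b/A)`). -/
def SameType (L : FirstOrder.Language.{0, 0}) {M : Type} [L.Structure M]
    (A : Set M) {n : ℕ} (a b : Fin n → M) : Prop :=
  ∀ (k : ℕ) (φ : L.Formula (Fin n ⊕ Fin k)) (c : Fin k → M),
    (∀ i, c i ∈ A) → (φ.Realize (Sum.elim a c) ↔ φ.Realize (Sum.elim b c))

/-- The complete type of the tuple `a` over the set `A`: the collection of all
formulas with parameters in `A` realized by `a`. -/
def Tp (L : FirstOrder.Language.{0, 0}) {M : Type} [L.Structure M]
    (A : Set M) {n : ℕ} (a : Fin n → M) : Set (FP L M n) :=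
  {F | F.ParamsIn A ∧ F.Realize a}

/-- The (partial) type `p` entails the formula-with-parameters `F`. -/
def Entails {L : FirstOrder.Language.{0, 0}} {M : Type} [L.Structure M] {n : ℕ}
    (p : Set (FP L M n)) (F : FP L M n) : Prop :=
  ∀ a : Fin n → M, (∀ G ∈ p, G.Realize a) → F.Realize a

/-- The (partial) type `p` forks over the set `A`: there are a formula
`φ(x̄, ȳ)`, tuples `c i` all having the same type over `A`, and `k < ω` such
that `p ⊢ φ(x̄, c 0)` and `{φ(x̄, c i) | i < ω}` is `k`-inconsistent. -/
def ForksOver {L : FirstOrder.Language.{0, 0}} {M : Type} [L.Structure M] {n : ℕ}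
    (p : Set (FP L M n)) (A : Set M) : Prop :=
  ∃ (m : ℕ) (φ : L.Formula (Fin n ⊕ Fin m)) (c : ℕ → Fin m → M) (k : ℕ),
    (∀ i : ℕ, SameType L A (c i) (c 0)) ∧
    Entails p ⟨m, (φ, c 0)⟩ ∧
    ∀ s : Finset ℕ, s.card = k →
      ¬ ∃ a : Fin n → M, ∀ i ∈ s, φ.Realize (Sum.elim a (c i))

/-- The family of sets `C` is independent over `A`: for every `i` and every
tuple `c` from `C i`, `tp(c / A ∪ ⋃_{j ≠ i} C j)` does not fork over `A`. -/
def IndepFamily (L : FirstOrder.Language.{0, 0}) {M : Type} [L.Structure M]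
    {ι : Type} (A : Set M) (C : ι → Set M) : Prop :=
  ∀ (i : ι) (n : ℕ) (c : Fin n → M), (∀ j, c j ∈ C i) →
    ¬ ForksOver (Tp L (A ∪ ⋃ (j : ι) (_ : j ≠ i), C j) c) A

/-- The tuples `a` and `b` have the same complete type over `∅`. -/
def TpEq (L : FirstOrder.Language.{0, 0}) {M : Type} [L.Structure M] {n : ℕ}
    (a b : Fin n → M) : Prop :=
  ∀ ψ : L.Formula (Fin n), ψ.Realize a ↔ ψ.Realize b

/-- `tp(a/b)` is isolated: some formula `φ(x̄, b)` realized by `a` implies every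
formula over `b` realized by `a`. -/
def IsolatedOver (L : FirstOrder.Language.{0, 0}) {M : Type} [L.Structure M]
    {n m : ℕ} (a : Fin n → M) (b : Fin m → M) : Prop :=
  ∃ φ : L.Formula (Fin n ⊕ Fin m), φ.Realize (Sum.elim a b) ∧
    ∀ a' : Fin n → M, φ.Realize (Sum.elim a' b) →
      ∀ ψ : L.Formula (Fin n ⊕ Fin m),
        ψ.Realize (Sum.elim a b) → ψ.Realize (Sum.elim a' b)

/-- `tp(a/b)` is semi-isolated: some formula `φ(x̄, b)` realized by `a` implies
`tp(a)` (the complete type of `a` over `∅`). -/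
def SemiIsolatedOver (L : FirstOrder.Language.{0, 0}) {M : Type} [L.Structure M]
    {n m : ℕ} (a : Fin n → M) (b : Fin m → M) : Prop :=
  ∃ φ : L.Formula (Fin n ⊕ Fin m), φ.Realize (Sum.elim a b) ∧
    ∀ a' : Fin n → M, φ.Realize (Sum.elim a' b) →
      ∀ ψ : L.Formula (Fin n), ψ.Realize a → ψ.Realize a'

/-- `tp(a)` (over `∅`) is isolated. -/
def Isolated0 (L : FirstOrder.Language.{0, 0}) {M : Type} [L.Structure M]
    {n : ℕ} (a : Fin n → M) : Prop :=
  ∃ φ : L.Formula (Fin n), φ.Realize a ∧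
    ∀ a' : Fin n → M, φ.Realize a' →
      ∀ ψ : L.Formula (Fin n), ψ.Realize a → ψ.Realize a'

/-- `M` is `κ`-saturated: every finitely satisfiable set of formulas over a
parameter set of size `< κ` is realized in `M`. -/
def Saturated (L : FirstOrder.Language.{0, 0}) (M : Type) [L.Structure M]
    (κ : Cardinal.{0}) : Prop :=
  ∀ (n : ℕ) (A : Set M) (p : Set (FP L M n)),
    #A < κ → (∀ F ∈ p, F.ParamsIn A) →
    (∀ s : Finset (FP L M n), ↑s ⊆ p → ∃ a : Fin n → M, ∀ F ∈ s, F.Realize a) →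
    ∃ a : Fin n → M, ∀ F ∈ p, F.Realize a

/-- `M` is strongly `κ`-homogeneous: every partial elementary map defined on a
set of size `< κ` extends to an automorphism of `M`. -/
def StronglyHomogeneous (L : FirstOrder.Language.{0, 0}) (M : Type) [L.Structure M]
    (κ : Cardinal.{0}) : Prop :=
  ∀ (A : Set M) (f : M → M), #A < κ →
    (∀ (n : ℕ) (φ : L.Formula (Fin n)) (a : Fin n → M), (∀ i, a i ∈ A) →
      (φ.Realize a ↔ φ.Realize (f ∘ a))) →
    ∃ σ : M ≃[L] M, ∀ x ∈ A, σ x = f x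

/-- `M` is a simple structure: every complete type over a set `B` does not fork
over some subset `A ⊆ B` of size at most `|T| = |L| + ℵ₀`. -/
def SimpleStruct (L : FirstOrder.Language.{0, 0}) (M : Type) [L.Structure M] : Prop :=
  ∀ (n : ℕ) (B : Set M) (a : Fin n → M),
    ∃ A : Set M, A ⊆ B ∧ #A ≤ L.card + ℵ₀ ∧ ¬ ForksOver (Tp L B a) A

/-- `M` is a supersimple structure: every complete type over a set `B` does not
fork over some finite subset of `B`. -/
def SupersimpleStruct (L : FirstOrder.Language.{0, 0}) (M : Type) [L.Structure M] : Prop :=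
  ∀ (n : ℕ) (B : Set M) (a : Fin n → M),
    ∃ A : Set M, A ⊆ B ∧ A.Finite ∧ ¬ ForksOver (Tp L B a) A


/-- The language `{<} ∪ {c_n | n < ω}`: countably many constants and one
binary relation. -/
def LO : FirstOrder.Language.{0, 0} :=
  ⟨fun n => match n with | 0 => ℕ | _ => Empty,
   fun n => match n with | 2 => Unit | _ => Empty⟩

/-- The standard model `(ℚ, <, (n)_{n<ω})`. -/
noncomputable instance : LO.Structure ℚ where
  funMap {n} f x :=
    match n, f with
    | 0, k => ((show ℕ from k : ℕ) : ℚ)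
  RelMap {n} r x :=
    match n, r with
    | 2, _ => x 0 < x 1

/-- The interpretation of `<` in an `LO`-structure. -/
def ltM {M : Type} [LO.Structure M] (x y : M) : Prop :=
  Language.Structure.RelMap (L := LO) (show LO.Relations 2 from Unit.unit) ![x, y]

/-- The interpretation of the constant `c_k` in an `LO`-structure. -/
def constM {M : Type} [LO.Structure M] (k : ℕ) : M :=
  Language.Structure.funMap (L := LO) (show LO.Functions 0 from k) ![]

/-!
By back-and-forth, the truth of a formula in a dense linear order without endpoints depends only on
the relative order of its arguments and of the finitely many constants it mentions. So all elements
above every `c_n` have the same type over `∅`, and if `a < b` are two of them, then `tp(b/a)` is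
isolated by `a < x`, while `tp(a/b)` says that `x < b` and `x > c_n` for all `n`; no single formula
implies this, since a formula over `b` true of `a` also holds of some `c_N`.

Both types extend to global `∅`-invariant types, which rules out forking: `tp(b/a)` to the type of
an element above everything, `tp(a/b)` to the type of an element above the constants but below
everything else above them. On the other hand, if `a < b < c` then `tp(b/ac)` contains `a < x < c`,
and the interval `(a, c)` has infinitely many pairwise disjoint conjugates.
-/

open Language

section Types

variable {L : FirstOrder.Language.{0, 0}} {M : Type} [L.Structure M] {n m : ℕ}

/-- The tuple `d` realizes the (partial) type `p`. -/
def Realizes (p : Set (FP L M n)) (d : Fin n → M) : Prop :=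
  ∀ F ∈ p, F.Realize d

theorem realizes_tp_range_iff {a d : Fin n → M} {b : Fin m → M} :
    Realizes (Tp L (Set.range b) a) d ↔
      ∀ ψ : L.Formula (Fin n ⊕ Fin m),
        ψ.Realize (Sum.elim a b) → ψ.Realize (Sum.elim d b) := by
  refine ⟨fun h ψ hψ => h ⟨m, ψ, b⟩ ⟨Set.mem_range_self, hψ⟩, ?_⟩
  rintro h ⟨l, ψ, e⟩ ⟨he, hψ⟩
  change ∀ i : Fin l, e i ∈ Set.range b at he
  obtain ⟨g, rfl⟩ := Set.range_subset_range_iff_exists_comp.1 (Set.range_subset_iff.2 he)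
  have realize_relabel (x : Fin n → M) :
      (ψ.relabel (Sum.map id g)).Realize (Sum.elim x b) ↔ ψ.Realize (Sum.elim x (b ∘ g)) := by
    rw [Formula.realize_relabel, Sum.elim_comp_map, Function.comp_id]
  exact (realize_relabel d).1 (h _ ((realize_relabel a).2 hψ))

theorem sameType_empty_iff_tpEq {u v : Fin n → M} : SameType L ∅ u v ↔ TpEq L u v := by
  refine ⟨fun h ψ => ?_, fun h k ψ c hc => ?_⟩
  · simpa only [Formula.realize_relabel, Sum.elim_comp_inl] using
      h 0 (ψ.relabel Sum.inl) Fin.elim0 Fin.rec0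
  · have : IsEmpty (Fin k) := ⟨hc⟩
    have elim_eq (x : Fin n → M) : Sum.elim x c = x ∘ Sum.elim id isEmptyElim := by
      rw [Sum.comp_elim]
      exact congrArg _ (Subsingleton.elim _ _)
    simpa only [elim_eq, ← Formula.realize_relabel] using h (ψ.relabel (Sum.elim id isEmptyElim))

/-- `R d s` plays the role of "`d` is in generic position with respect to `s`" for a global
`A`-invariant type extending `p`: the existence of such an extension prevents forking over `A`. -/
theorem not_forksOver_of_invariant {p : Set (FP L M n)} {A : Set M} (R : (Fin n → M) → M → Prop)
    (exists_generic : ∀ S : Set M, S.Finite → ∃ d, Realizes p d ∧ ∀ s ∈ S, R d s)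
    (invariant : ∀ {m : ℕ} {u v : Fin m → M} {d e : Fin n → M}, SameType L A u v →
      Realizes p d → Realizes p e → (∀ i, R d (u i)) → (∀ i, R e (v i)) →
      ∀ φ : L.Formula (Fin n ⊕ Fin m), φ.Realize (Sum.elim d u) ↔ φ.Realize (Sum.elim e v)) :
    ¬ ForksOver p A := by
  rintro ⟨m, φ, c, k, hc, hφ, inconsistent⟩
  obtain ⟨d, hd, hd_gen⟩ := exists_generic (Set.range (c 0)) (Set.finite_range _)
  obtain ⟨e, he, he_gen⟩ := exists_generic (⋃ i ∈ Set.Iio k, Set.range (c i))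
    ((Set.finite_Iio k).biUnion fun i _ => Set.finite_range (c i))
  refine inconsistent (Finset.range k) (Finset.card_range k) ⟨e, fun i hi => ?_⟩
  have he_gen_i (j : Fin m) : R e (c i j) :=
    he_gen _ (Set.mem_biUnion (Finset.mem_range.1 hi) ⟨j, rfl⟩)
  exact (invariant (hc i) he hd he_gen_i (fun j => hd_gen _ ⟨j, rfl⟩) φ).2 (hφ d hd)

end Types

section Symbols

/-- The relation symbol `<` of `LO`. -/
def ltSymb : LO.Relations 2 := Unit.unit

/-- The constant symbol `c_k` of `LO`. -/
def constSymb (k : ℕ) : LO.Constants := k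

variable {M : Type} [LO.Structure M]

theorem relMap_ltSymb (x y : M) : Structure.RelMap ltSymb ![x, y] ↔ ltM x y := Iff.rfl

theorem coe_constSymb (k : ℕ) : (constSymb k : M) = constM k :=
  congrArg (Structure.funMap (constSymb k)) (Subsingleton.elim _ _)

theorem term_eq_var_or_const {α : Type*} (t : LO.Term α) :
    (∃ i, t = Term.var i) ∨ ∃ k, t = (constSymb k).term := by
  match t with
  | .var i => exact .inl ⟨i, rfl⟩
  | .func (l := 0) k ts => exact .inr ⟨k, congrArg (Term.func k) (Subsingleton.elim _ _)⟩
  | .func (l := _ + 1) f _ => exact Empty.elim f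

theorem rel_eq_boundedFormula₂_ltSymb {α : Type*} {n l : ℕ} (r : LO.Relations l)
    (ts : Fin l → LO.Term (α ⊕ Fin n)) :
    ∃ t₁ t₂, BoundedFormula.rel r ts = ltSymb.boundedFormula₂ t₁ t₂ := by
  match l, r with
  | 2, _ => exact ⟨ts 0, ts 1, congrArg (BoundedFormula.rel ltSymb) (List.ofFn_inj.1 rfl)⟩

end Symbols

/-- Dense linear orders without endpoints carrying an increasing sequence of constants: the models
of `Th(ℚ, <, (n)_{n<ω})`, seen as ordered sets. -/
class EhrenfeuchtOrder (M : Type) [LO.Structure M] [LinearOrder M] : Prop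
    extends DenselyOrdered M, NoMinOrder M, NoMaxOrder M where
  ltM_iff_lt (x y : M) : ltM x y ↔ x < y
  strictMono_constM : StrictMono (constM : ℕ → M)

section ModelsOfCompleteTheory

variable {M : Type} [LO.Structure M] [M ⊨ LO.completeTheory ℚ]

theorem eq_of_not_ltM {x y : M} (hxy : ¬ ltM x y) (hyx : ¬ ltM y x) : x = y := by
  have transfer : (∀ x y : M, ¬ ltM x y → ¬ ltM y x → x = y) ↔
      ∀ x y : ℚ, ¬ ltM x y → ¬ ltM y x → x = y := by
    simpa [Sentence.Realize, Formula.Realize, Fin.snoc, relMap_ltSymb] using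
      realize_iff_of_model_completeTheory ℚ M
        (∀' ∀' (∼(ltSymb.boundedFormula₂ &0 &1) ⟹ ∼(ltSymb.boundedFormula₂ &1 &0) ⟹
          Term.bdEqual &0 &1))
  exact transfer.2 (fun _ _ hxy hyx => le_antisymm (not_lt.1 hyx) (not_lt.1 hxy)) x y hxy hyx

theorem exists_ltM_between {x y : M} (hxy : ltM x y) : ∃ z, ltM x z ∧ ltM z y := by
  have transfer : (∀ x y : M, ltM x y → ∃ z, ltM x z ∧ ltM z y) ↔
      ∀ x y : ℚ, ltM x y → ∃ z, ltM x z ∧ ltM z y := by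
    simpa [Sentence.Realize, Formula.Realize, Fin.snoc, relMap_ltSymb] using
      realize_iff_of_model_completeTheory ℚ M
        (∀' ∀' (ltSymb.boundedFormula₂ &0 &1 ⟹
          ∃' (ltSymb.boundedFormula₂ &0 &2 ⊓ ltSymb.boundedFormula₂ &2 &1)))
  exact transfer.2 (fun _ _ => exists_between) x y hxy

theorem exists_ltM_right (x : M) : ∃ y, ltM x y := by
  have transfer : (∀ x : M, ∃ y, ltM x y) ↔ ∀ x : ℚ, ∃ y, ltM x y := by
    simpa [Sentence.Realize, Formula.Realize, Fin.snoc, relMap_ltSymb] using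
      realize_iff_of_model_completeTheory ℚ M (∀' ∃' ltSymb.boundedFormula₂ &0 &1)
  exact transfer.2 exists_gt x

theorem exists_ltM_left (x : M) : ∃ y, ltM y x := by
  have transfer : (∀ x : M, ∃ y, ltM y x) ↔ ∀ x : ℚ, ∃ y, ltM y x := by
    simpa [Sentence.Realize, Formula.Realize, Fin.snoc, relMap_ltSymb] using
      realize_iff_of_model_completeTheory ℚ M (∀' ∃' ltSymb.boundedFormula₂ &1 &0)
  exact transfer.2 exists_lt x

theorem ltM_constM {i j : ℕ} (hij : i < j) : ltM (constM i : M) (constM j) := by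
  have transfer : ltM (constM i : M) (constM j) ↔ ltM (constM i : ℚ) (constM j) := by
    simpa [Sentence.Realize, relMap_ltSymb, coe_constSymb] using
      realize_iff_of_model_completeTheory ℚ M
        (ltSymb.formula₂ (constSymb i).term (constSymb j).term)
  exact transfer.2 (Nat.cast_lt.2 hij)

variable (M)

theorem isStrictTotalOrder_ltM : IsStrictTotalOrder M ltM where
  irrefl := by
    have transfer := realize_iff_of_model_completeTheory ℚ M ltSymb.irreflexive
    rw [Relations.realize_irreflexive, Relations.realize_irreflexive] at transfer
    exact (transfer.2 (inferInstanceAs (Std.Irrefl ((· < ·) : ℚ → ℚ → Prop)))).irrefl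
  trans := by
    have transfer := realize_iff_of_model_completeTheory ℚ M ltSymb.transitive
    rw [Relations.realize_transitive, Relations.realize_transitive] at transfer
    exact (transfer.2 (inferInstanceAs (IsTrans ℚ (· < ·)))).trans
  trichotomous _ _ := eq_of_not_ltM

/-- The linear order of a model of `Th(ℚ, <, (n)_{n<ω})`; its `<` unfolds to `ltM`. -/
noncomputable abbrev modelOrder : LinearOrder M :=
  haveI := isStrictTotalOrder_ltM M
  haveI : DecidableRel (ltM : M → M → Prop) := Classical.decRel _
  linearOrderOfSTO ltM

theorem ehrenfeuchtOrder_modelOrder : @EhrenfeuchtOrder M _ (modelOrder M) :=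
  letI := modelOrder M
  { dense := fun _ _ => exists_ltM_between
    exists_lt := exists_ltM_left
    exists_gt := exists_ltM_right
    ltM_iff_lt := fun _ _ => Iff.rfl
    strictMono_constM := fun _ _ => ltM_constM }

end ModelsOfCompleteTheory

section SameOrder

variable {M N : Type} [LO.Structure M] [LinearOrder M] [LO.Structure N] [LinearOrder N]
  {α β : Type*} {K : Set ℕ}

/-- The tuples `u` and `v` are ordered in the same way and lie in the same position with respect to
the constants `c_k`, `k ∈ K`. For `K = univ` this is equality of quantifier-free types. -/
structure SameOrder (K : Set ℕ) (u : α → M) (v : α → N) : Prop where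
  cmp_eq (i j : α) : cmp (u i) (u j) = cmp (v i) (v j)
  cmp_const (i : α) (k : ℕ) (hk : k ∈ K) : cmp (u i) (constM k) = cmp (v i) (constM k)

theorem SameOrder.sumElim {u : α → M} {v : α → N} {u' : β → M} {v' : β → N}
    (h : SameOrder K u v) (h' : SameOrder K u' v')
    (cross : ∀ i j, cmp (u i) (u' j) = cmp (v i) (v' j)) :
    SameOrder K (Sum.elim u u') (Sum.elim v v') where
  cmp_eq
    | .inl i, .inl j => h.cmp_eq i j
    | .inl i, .inr j => cross i j
    | .inr i, .inl j => cmp_eq_cmp_symm.1 (cross j i)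
    | .inr i, .inr j => h'.cmp_eq i j
  cmp_const
    | .inl i, k, hk => h.cmp_const i k hk
    | .inr i, k, hk => h'.cmp_const i k hk

theorem sameOrder_of_constM_lt [Subsingleton α] {u : α → M} {v : α → N} {i : α}
    (hu : ∀ k ∈ K, constM k < u i) (hv : ∀ k ∈ K, constM k < v i) : SameOrder K u v where
  cmp_eq j l := by simp only [Subsingleton.elim j l, cmp_self_eq_eq]
  cmp_const j k hk := by
    rw [Subsingleton.elim j i, (hu k hk).cmp_eq_gt, (hv k hk).cmp_eq_gt]

theorem SameOrder.refl (K : Set ℕ) (u : α → M) : SameOrder K u u :=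
  ⟨fun _ _ => rfl, fun _ _ _ => rfl⟩

end SameOrder

section QuantifierElimination

variable {M N : Type} [LO.Structure M] [LinearOrder M] [LO.Structure N] [LinearOrder N]
  {α : Type*} {n b : ℕ}

/-- The formula `φ` is preserved by every finite partial order isomorphism which fixes `c_k` for
all `k < b`. -/
def PreservedByPartialIso (M N : Type) [LO.Structure M] [LinearOrder M] [LO.Structure N]
    [LinearOrder N] (b : ℕ) (φ : LO.BoundedFormula α n) : Prop :=
  ∀ f : Order.PartialIso M N, (∀ k < b, (constM k, constM k) ∈ f.val) →
    ∀ (u : α → M) (v : α → N) (xs : Fin n → M) (ys : Fin n → N),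
      (∀ i, (u i, v i) ∈ f.val) → (∀ i, (xs i, ys i) ∈ f.val) →
        (φ.Realize u xs ↔ φ.Realize v ys)

theorem PreservedByPartialIso.mono {φ : LO.BoundedFormula α n} {b b' : ℕ}
    (h : PreservedByPartialIso M N b φ) (hb : b ≤ b') : PreservedByPartialIso M N b' φ :=
  fun f hf => h f fun k hk => hf k (hk.trans_le hb)

theorem PreservedByPartialIso.imp {φ ψ : LO.BoundedFormula α n}
    (hφ : PreservedByPartialIso M N b φ) (hψ : PreservedByPartialIso M N b ψ) :
    PreservedByPartialIso M N b (φ.imp ψ) :=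
  fun f hf u v xs ys hu hx =>
    imp_congr (hφ f hf u v xs ys hu hx) (hψ f hf u v xs ys hu hx)

theorem PreservedByPartialIso.all [EhrenfeuchtOrder M] [EhrenfeuchtOrder N]
    {φ : LO.BoundedFormula α (n + 1)} (hφ : PreservedByPartialIso M N b φ) :
    PreservedByPartialIso M N b φ.all := by
  intro f hf u v xs ys hu hx
  have : Nonempty M := ⟨constM 0⟩
  have : Nonempty N := ⟨constM 0⟩
  have realize_snoc {g : Order.PartialIso M N} (hfg : f ≤ g) {x : M} {y : N}
      (hxy : (x, y) ∈ g.val) : φ.Realize u (Fin.snoc xs x) ↔ φ.Realize v (Fin.snoc ys y) := by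
    refine hφ g (fun k hk => hfg (hf k hk)) u v _ _ (fun i => hfg (hu i)) fun i => ?_
    induction i using Fin.lastCases with
    | last => simpa only [Fin.snoc_last] using hxy
    | cast i => simpa only [Fin.snoc_castSucc] using hfg (hx i)
  refine ⟨fun h y => ?_, fun h x => ?_⟩
  · obtain ⟨g, ⟨x, hxy⟩, hfg⟩ := (Order.PartialIso.definedAtRight M y).isCofinal f
    exact (realize_snoc hfg hxy).1 (h x)
  · obtain ⟨g, ⟨y, hxy⟩, hfg⟩ := (Order.PartialIso.definedAtLeft N x).isCofinal f
    exact (realize_snoc hfg hxy).2 (h y)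

theorem exists_realize_term_mem (t : LO.Term α) :
    ∃ b : ℕ, ∀ f : Order.PartialIso M N, (∀ k < b, (constM k, constM k) ∈ f.val) →
      ∀ (u : α → M) (v : α → N), (∀ i, (u i, v i) ∈ f.val) →
        (t.realize u, t.realize v) ∈ f.val := by
  obtain ⟨i, rfl⟩ | ⟨k, rfl⟩ := term_eq_var_or_const t
  · exact ⟨0, fun _ _ _ _ huv => huv i⟩
  · refine ⟨k + 1, fun f hf _ _ _ => ?_⟩
    simpa only [Term.realize_constants, coe_constSymb] using hf k k.lt_succ_self

theorem exists_cmp_realize_term_eq (t₁ t₂ : LO.Term (α ⊕ Fin n)) :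
    ∃ b : ℕ, ∀ f : Order.PartialIso M N, (∀ k < b, (constM k, constM k) ∈ f.val) →
      ∀ (u : α → M) (v : α → N) (xs : Fin n → M) (ys : Fin n → N),
        (∀ i, (u i, v i) ∈ f.val) → (∀ i, (xs i, ys i) ∈ f.val) →
        cmp (t₁.realize (Sum.elim u xs)) (t₂.realize (Sum.elim u xs)) =
          cmp (t₁.realize (Sum.elim v ys)) (t₂.realize (Sum.elim v ys)) := by
  obtain ⟨b₁, h₁⟩ := exists_realize_term_mem (M := M) (N := N) t₁
  obtain ⟨b₂, h₂⟩ := exists_realize_term_mem (M := M) (N := N) t₂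
  refine ⟨max b₁ b₂, fun f hf u v xs ys hu hx => ?_⟩
  have hux : ∀ i, (Sum.elim u xs i, Sum.elim v ys i) ∈ f.val := Sum.rec hu hx
  exact f.prop _ (h₁ f (fun k hk => hf k (lt_max_of_lt_left hk)) _ _ hux)
    _ (h₂ f (fun k hk => hf k (lt_max_of_lt_right hk)) _ _ hux)

variable (M N) [EhrenfeuchtOrder M] [EhrenfeuchtOrder N]

theorem exists_preservedByPartialIso (φ : LO.BoundedFormula α n) :
    ∃ b, PreservedByPartialIso M N b φ := by
  induction φ with
  | falsum => exact ⟨0, fun _ _ _ _ _ _ _ _ => Iff.rfl⟩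
  | equal t₁ t₂ =>
    obtain ⟨b, hb⟩ := exists_cmp_realize_term_eq (M := M) (N := N) t₁ t₂
    exact ⟨b, fun f hf u v xs ys hu hx =>
      eq_iff_eq_of_cmp_eq_cmp (hb f hf u v xs ys hu hx)⟩
  | rel r ts =>
    obtain ⟨t₁, t₂, h⟩ := rel_eq_boundedFormula₂_ltSymb r ts
    obtain ⟨b, hb⟩ := exists_cmp_realize_term_eq (M := M) (N := N) t₁ t₂
    refine ⟨b, fun f hf u v xs ys hu hx => ?_⟩
    simp only [h, BoundedFormula.realize_rel₂, relMap_ltSymb, EhrenfeuchtOrder.ltM_iff_lt]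
    exact lt_iff_lt_of_cmp_eq_cmp (hb f hf u v xs ys hu hx)
  | imp φ ψ ihφ ihψ =>
    obtain ⟨b₁, h₁⟩ := ihφ
    obtain ⟨b₂, h₂⟩ := ihψ
    exact ⟨max b₁ b₂, (h₁.mono (le_max_left _ _)).imp (h₂.mono (le_max_right _ _))⟩
  | all φ ih =>
    obtain ⟨b, hb⟩ := ih
    exact ⟨b, hb.all⟩

variable {M N}

theorem exists_partialIso_of_cmp_eq {ι P Q : Type*} [Finite ι] [LinearOrder P] [LinearOrder Q]
    {u : ι → P} {v : ι → Q} (h : ∀ i j, cmp (u i) (u j) = cmp (v i) (v j)) :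
    ∃ f : Order.PartialIso P Q, ∀ i, (u i, v i) ∈ f.val := by
  classical
  cases nonempty_fintype ι
  exact ⟨⟨Finset.univ.image fun i => (u i, v i), by simpa using h⟩,
    fun i => Finset.mem_image_of_mem _ (Finset.mem_univ i)⟩

theorem SameOrder.exists_partialIso [Finite α] {u : α → M} {v : α → N}
    (h : SameOrder (Set.Iio b) u v) :
    ∃ f : Order.PartialIso M N, (∀ k < b, (constM k, constM k) ∈ f.val) ∧
      ∀ i, (u i, v i) ∈ f.val := by
  have h_const : SameOrder (Set.Iio b) (fun k : Fin b => (constM k : M))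
      (fun k : Fin b => (constM k : N)) := by
    constructor <;> intros <;>
      rw [EhrenfeuchtOrder.strictMono_constM.cmp_map_eq,
        EhrenfeuchtOrder.strictMono_constM.cmp_map_eq]
  obtain ⟨f, hf⟩ := exists_partialIso_of_cmp_eq
    (h.sumElim h_const fun i k => h.cmp_const i k k.is_lt).cmp_eq
  exact ⟨f, fun k hk => hf (.inr ⟨k, hk⟩), fun i => hf (.inl i)⟩

variable (M N) in
theorem exists_realize_iff_of_sameOrder [Finite α] (φ : LO.Formula α) :
    ∃ b : ℕ, ∀ (u : α → M) (v : α → N), SameOrder (Set.Iio b) u v →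
      (φ.Realize u ↔ φ.Realize v) := by
  obtain ⟨b, hb⟩ := exists_preservedByPartialIso M N φ
  refine ⟨b, fun u v h => ?_⟩
  obtain ⟨f, hf, huv⟩ := h.exists_partialIso
  exact hb f hf u v _ _ huv Fin.rec0

theorem SameOrder.realize_iff [Finite α] {u : α → M} {v : α → N}
    (h : SameOrder Set.univ u v) (φ : LO.Formula α) : φ.Realize u ↔ φ.Realize v := by
  obtain ⟨b, hb⟩ := exists_realize_iff_of_sameOrder M N φ
  exact hb u v ⟨h.cmp_eq, fun i k _ => h.cmp_const i k trivial⟩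

end QuantifierElimination

section Infinite

variable {M : Type} [LO.Structure M] [LinearOrder M] {α : Type*} {n : ℕ}

/-- The element `x` lies above all the constants `c_k`. -/
def IsInfinite (x : M) : Prop :=
  ∀ k, constM k < x

theorem IsInfinite.mono {x y : M} (hx : IsInfinite x) (hxy : x ≤ y) : IsInfinite y :=
  fun k => (hx k).trans_le hxy

theorem IsInfinite.lt_of_not_isInfinite {x y : M} (hy : IsInfinite y) (hx : ¬ IsInfinite x) :
    x < y := by
  obtain ⟨k, hk⟩ := not_forall.1 hx
  exact (not_lt.1 hk).trans_lt (hy k)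

theorem sameOrder_of_isInfinite [Subsingleton α] {u v : α → M} {i : α} (hu : IsInfinite (u i))
    (hv : IsInfinite (v i)) : SameOrder Set.univ u v :=
  sameOrder_of_constM_lt (fun k _ => hu k) (fun k _ => hv k)

theorem SameOrder.lt_iff_lt {K : Set ℕ} {u v : α → M} (h : SameOrder K u v) (i j : α) :
    u i < u j ↔ v i < v j :=
  lt_iff_lt_of_cmp_eq_cmp (h.cmp_eq i j)

theorem SameOrder.isInfinite_iff {u v : α → M} (h : SameOrder Set.univ u v) (i : α) :
    IsInfinite (u i) ↔ IsInfinite (v i) :=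
  forall_congr' fun k => lt_iff_lt_of_cmp_eq_cmp (cmp_eq_cmp_symm.1 (h.cmp_const i k trivial))

variable [EhrenfeuchtOrder M]

theorem realize_formula₂_ltSymb {t₁ t₂ : LO.Term α} {v : α → M} :
    (ltSymb.formula₂ t₁ t₂).Realize v ↔ t₁.realize v < t₂.realize v := by
  rw [Formula.realize_rel₂, relMap_ltSymb, EhrenfeuchtOrder.ltM_iff_lt]

theorem tpEq_iff_sameOrder {u v : Fin n → M} : TpEq LO u v ↔ SameOrder Set.univ u v := by
  refine ⟨fun h => ?_, fun h => h.realize_iff⟩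
  have lt_iff (t₁ t₂ : LO.Term (Fin n)) :
      t₁.realize u < t₂.realize u ↔ t₁.realize v < t₂.realize v := by
    simpa only [realize_formula₂_ltSymb] using h (ltSymb.formula₂ t₁ t₂)
  have cmp_eq (t₁ t₂ : LO.Term (Fin n)) :
      cmp (t₁.realize u) (t₂.realize u) = cmp (t₁.realize v) (t₂.realize v) := by
    simp only [cmp, cmpUsing, lt_iff]
  refine ⟨fun i j => cmp_eq (.var i) (.var j), fun i k _ => ?_⟩
  simpa only [Term.realize_constants, coe_constSymb, Term.realize_var] using
    cmp_eq (.var i) (constSymb k).term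

end Infinite

section Saturation

variable {M : Type} [LO.Structure M] [LinearOrder M] [EhrenfeuchtOrder M] {κ : Cardinal.{0}}

theorem exists_isInfinite_lt (hκ : 1 < κ) (hsat : Saturated LO M κ) {b : M} (hb : IsInfinite b) :
    ∃ d, IsInfinite d ∧ d < b := by
  let below : FP LO M 1 := ⟨1, ltSymb.formula₂ (.var (.inl 0)) (.var (.inr 0)), fun _ => b⟩
  let above (k : ℕ) : FP LO M 1 :=
    ⟨1, ltSymb.formula₂ (constSymb k).term (.var (.inl 0)), fun _ => b⟩
  have realize_below (d : Fin 1 → M) : below.Realize d ↔ d 0 < b := realize_formula₂_ltSymb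
  have realize_above (k : ℕ) (d : Fin 1 → M) : (above k).Realize d ↔ constM k < d 0 :=
    realize_formula₂_ltSymb.trans (by rw [Term.realize_constants, coe_constSymb]; rfl)
  have params : ∀ F ∈ insert below (Set.range above), F.ParamsIn {b} := by
    rintro _ (rfl | ⟨k, rfl⟩) <;> exact fun _ => rfl
  have eventually_realize : ∀ F ∈ insert below (Set.range above),
      ∀ᶠ k in Filter.atTop, F.Realize fun _ => constM k := by
    rintro _ (rfl | ⟨j, rfl⟩)
    · exact .of_forall fun k => (realize_below _).2 (hb k)
    · filter_upwards [Filter.eventually_gt_atTop j] with k hk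
      exact (realize_above j _).2 (EhrenfeuchtOrder.strictMono_constM hk)
  obtain ⟨d, hd⟩ := hsat 1 {b} _ (by rwa [mk_singleton]) params fun s hs =>
    have ⟨k, hk⟩ := ((Filter.eventually_all_finset s).2 fun F hF =>
      eventually_realize F (hs hF)).exists
    ⟨_, hk⟩
  exact ⟨d 0, fun k => (realize_above k d).1 (hd _ (.inr ⟨k, rfl⟩)),
    (realize_below d).1 (hd _ (.inl rfl))⟩

theorem exists_isInfinite_lt_forall (hκ : 1 < κ) (hsat : Saturated LO M κ) {b : M}
    (hb : IsInfinite b) {S : Set M} (hS : S.Finite) :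
    ∃ d, IsInfinite d ∧ d < b ∧ ∀ s ∈ S, IsInfinite s → d < s := by
  obtain ⟨m, hm, hm_le⟩ := Set.exists_min_image (insert b {s ∈ S | IsInfinite s}) id
    ((hS.subset (Set.sep_subset _ _)).insert b) (Set.insert_nonempty _ _)
  have hm_inf : IsInfinite m := by
    obtain rfl | hm := hm
    exacts [hb, hm.2]
  obtain ⟨d, hd, hdm⟩ := exists_isInfinite_lt hκ hsat hm_inf
  exact ⟨d, hd, hdm.trans_le (hm_le b (.inl rfl)),
    fun s hs hs_inf => hdm.trans_le (hm_le s (.inr ⟨hs, hs_inf⟩))⟩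

end Saturation

section InfinitePair

variable {M : Type} [LO.Structure M] [LinearOrder M] [EhrenfeuchtOrder M] {a b : M}

theorem tpEq_of_isInfinite (ha : IsInfinite a) (hb : IsInfinite b) :
    TpEq LO (fun _ : Fin 1 => a) (fun _ : Fin 1 => b) :=
  tpEq_iff_sameOrder.2 (sameOrder_of_isInfinite (i := 0) ha hb)

theorem realizes_tp_right_iff (ha : IsInfinite a) (hab : a < b) {d : Fin 1 → M} :
    Realizes (Tp LO (Set.range fun _ : Fin 1 => a) (fun _ : Fin 1 => b)) d ↔ a < d 0 := by
  refine realizes_tp_range_iff.trans ⟨fun h => ?_, fun hd ψ => ?_⟩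
  · exact realize_formula₂_ltSymb.1 (h (ltSymb.formula₂ (.var (.inr 0)) (.var (.inl 0)))
      (realize_formula₂_ltSymb.2 hab))
  · have hbd : SameOrder Set.univ (fun _ : Fin 1 => b) d :=
      sameOrder_of_isInfinite (i := 0) (ha.mono hab.le) (ha.mono hd.le)
    refine ((hbd.sumElim (.refl _ fun _ : Fin 1 => a) fun i _ => ?_).realize_iff ψ).1
    rw [Subsingleton.elim i 0, hab.cmp_eq_gt, hd.cmp_eq_gt]

theorem realizes_tp_left_iff (ha : IsInfinite a) (hab : a < b) {d : Fin 1 → M} :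
    Realizes (Tp LO (Set.range fun _ : Fin 1 => b) (fun _ : Fin 1 => a)) d ↔
      IsInfinite (d 0) ∧ d 0 < b := by
  refine realizes_tp_range_iff.trans ⟨fun h => ⟨fun k => ?_, ?_⟩, fun ⟨hd, hdb⟩ ψ => ?_⟩
  · have const_lt := h (ltSymb.formula₂ (constSymb k).term (.var (.inl 0)))
    simp only [realize_formula₂_ltSymb, Term.realize_constants, coe_constSymb] at const_lt
    exact const_lt (ha k)
  · exact realize_formula₂_ltSymb.1 (h (ltSymb.formula₂ (.var (.inl 0)) (.var (.inr 0)))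
      (realize_formula₂_ltSymb.2 hab))
  · have had : SameOrder Set.univ (fun _ : Fin 1 => a) d :=
      sameOrder_of_isInfinite (i := 0) ha hd
    refine ((had.sumElim (.refl _ fun _ : Fin 1 => b) fun i _ => ?_).realize_iff ψ).1
    rw [Subsingleton.elim i 0, hab.cmp_eq_lt, hdb.cmp_eq_lt]

theorem isolatedOver_of_lt (ha : IsInfinite a) (hab : a < b) :
    IsolatedOver LO (fun _ : Fin 1 => b) (fun _ : Fin 1 => a) :=
  ⟨ltSymb.formula₂ (.var (.inr 0)) (.var (.inl 0)), realize_formula₂_ltSymb.2 hab, fun _ hd =>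
    realizes_tp_range_iff.1 ((realizes_tp_right_iff ha hab).2 (realize_formula₂_ltSymb.1 hd))⟩

theorem not_isolatedOver_of_lt (ha : IsInfinite a) (hab : a < b) :
    ¬ IsolatedOver LO (fun _ : Fin 1 => a) (fun _ : Fin 1 => b) := by
  rintro ⟨φ, hφ, isolates⟩
  obtain ⟨N, hN⟩ := exists_realize_iff_of_sameOrder M M φ
  have h : SameOrder (Set.Iio N) (fun _ : Fin 1 => a) (fun _ : Fin 1 => (constM N : M)) :=
    sameOrder_of_constM_lt (i := 0) (fun k _ => ha k)
      (fun _ hk => EhrenfeuchtOrder.strictMono_constM hk)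
  have hφN : φ.Realize (Sum.elim (fun _ => constM N) fun _ => b) :=
    (hN _ _ (h.sumElim (.refl _ fun _ => b) fun _ _ =>
      hab.cmp_eq_lt.trans ((ha N).trans hab).cmp_eq_lt.symm)).1 hφ
  have hN_inf : IsInfinite (constM N : M) :=
    ((realizes_tp_left_iff ha hab).1 (realizes_tp_range_iff.2 (isolates _ hφN))).1
  exact (hN_inf N).false

theorem not_forksOver_tp_left {κ : Cardinal.{0}} (hκ : 1 < κ) (hsat : Saturated LO M κ)
    (ha : IsInfinite a) (hab : a < b) :
    ¬ ForksOver (Tp LO (Set.range fun _ : Fin 1 => b) (fun _ : Fin 1 => a)) ∅ := by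
  refine not_forksOver_of_invariant (fun d s => IsInfinite s → d 0 < s) (fun S hS => ?_) ?_
  · obtain ⟨d, hd, hdb, hdS⟩ :=
      exists_isInfinite_lt_forall hκ hsat (ha.mono hab.le) hS
    exact ⟨fun _ => d, (realizes_tp_left_iff ha hab).2 ⟨hd, hdb⟩, hdS⟩
  · intro m u v d e huv hd he hdu hev
    have h := tpEq_iff_sameOrder.1 (sameType_empty_iff_tpEq.1 huv)
    have hd_inf := ((realizes_tp_left_iff ha hab).1 hd).1
    have he_inf := ((realizes_tp_left_iff ha hab).1 he).1
    refine ((sameOrder_of_isInfinite hd_inf he_inf).sumElim h fun i j => ?_).realize_iff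
    rw [Subsingleton.elim i 0]
    by_cases hu : IsInfinite (u j)
    · exact (hdu j hu).cmp_eq_lt.trans (hev j ((h.isInfinite_iff j).1 hu)).cmp_eq_lt.symm
    · exact (hd_inf.lt_of_not_isInfinite hu).cmp_eq_gt.trans
        (he_inf.lt_of_not_isInfinite (mt (h.isInfinite_iff j).2 hu)).cmp_eq_gt.symm

theorem not_forksOver_tp_right (ha : IsInfinite a) (hab : a < b) :
    ¬ ForksOver (Tp LO (Set.range fun _ : Fin 1 => a) (fun _ : Fin 1 => b)) ∅ := by
  have : Nonempty M := ⟨a⟩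
  refine not_forksOver_of_invariant (fun d s => s < d 0) (fun S hS => ?_) ?_
  · obtain ⟨m, hm⟩ := (hS.insert a).bddAbove
    obtain ⟨d, hmd⟩ := exists_gt m
    exact ⟨fun _ => d, (realizes_tp_right_iff ha hab).2 ((hm (.inl rfl)).trans_lt hmd),
      fun s hs => (hm (.inr hs)).trans_lt hmd⟩
  · intro m u v d e huv hd he hud hve
    have had := (realizes_tp_right_iff ha hab).1 hd
    have hae := (realizes_tp_right_iff ha hab).1 he
    have hde : SameOrder Set.univ d e :=
      sameOrder_of_isInfinite (ha.mono had.le) (ha.mono hae.le)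
    have h := tpEq_iff_sameOrder.1 (sameType_empty_iff_tpEq.1 huv)
    refine (hde.sumElim h fun i j => ?_).realize_iff
    rw [Subsingleton.elim i 0]
    exact (hud j).cmp_eq_gt.trans (hve j).cmp_eq_gt.symm

end InfinitePair

section Forking

variable {M : Type} [LO.Structure M] [LinearOrder M] {a b c : M}

theorem sameOrder_pair {a' b' : M} (hab : a < b) (ha : IsInfinite a) (hab' : a' < b')
    (ha' : IsInfinite a') : SameOrder Set.univ ![a, b] ![a', b'] where
  cmp_eq := by
    simp [Fin.forall_fin_two, hab.cmp_eq_lt, hab.cmp_eq_gt, hab'.cmp_eq_lt, hab'.cmp_eq_gt]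
  cmp_const i k _ := by
    revert i
    simp [Fin.forall_fin_two, (ha k).cmp_eq_gt, (ha' k).cmp_eq_gt, ((ha k).trans hab).cmp_eq_gt,
      ((ha' k).trans hab').cmp_eq_gt]

variable [EhrenfeuchtOrder M]

theorem tpEq_pair_iff {a' b' : M} (hab : a < b) (ha : IsInfinite a) :
    TpEq LO ![a', b'] ![a, b] ↔ IsInfinite a' ∧ a' < b' := by
  rw [tpEq_iff_sameOrder]
  exact ⟨fun h => ⟨(h.isInfinite_iff 0).2 ha, (h.lt_iff_lt 0 1).2 hab⟩,
    fun ⟨ha', hab'⟩ => sameOrder_pair hab' ha' hab ha⟩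


theorem forksOver_tp_between (ha : IsInfinite a) (hab : a < b) (hbc : b < c) :
    ForksOver (Tp LO ({a, c} : Set M) (fun _ : Fin 1 => b)) ∅ := by
  have : Nonempty M := ⟨a⟩
  obtain ⟨g, hg, rfl⟩ := Nat.exists_strictMono' c
  let t (i : ℕ) : M := i.casesOn a g
  have ht : StrictMono t := by
    refine strictMono_nat_of_lt_succ fun i => ?_
    cases i with
    | zero => exact hab.trans hbc
    | succ i => exact hg i.lt_succ_self
  have ht_inf (i : ℕ) : IsInfinite (t i) := ha.mono (ht.monotone i.zero_le)
  let between : LO.Formula (Fin 1 ⊕ Fin 2) :=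
    ltSymb.formula₂ (.var (.inr 0)) (.var (.inl 0)) ⊓
      ltSymb.formula₂ (.var (.inl 0)) (.var (.inr 1))
  have realize_between (d : Fin 1 → M) (x y : M) :
      between.Realize (Sum.elim d ![x, y]) ↔ d 0 ∈ Set.Ioo x y :=
    Formula.realize_inf.trans (and_congr realize_formula₂_ltSymb realize_formula₂_ltSymb)
  refine ⟨2, between, fun i => ![t i, t (i + 1)], 2, fun i => ?_, fun d hd => ?_, ?_⟩
  · exact sameType_empty_iff_tpEq.2
      ((tpEq_pair_iff (ht Nat.zero_lt_one) ha).2 ⟨ht_inf i, ht i.lt_succ_self⟩)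
  · exact hd ⟨2, between, ![a, g 0]⟩
      ⟨Fin.forall_fin_two.2 ⟨.inl rfl, .inr rfl⟩, (realize_between _ _ _).2 ⟨hab, hbc⟩⟩
  · rintro s hs ⟨d, hd⟩
    obtain ⟨i, j, hij, rfl⟩ := Finset.card_eq_two.1 hs
    have mem_Ioo {l : ℕ} (hl : l ∈ ({i, j} : Finset ℕ)) : d 0 ∈ Set.Ioo (t l) (t (l + 1)) :=
      (realize_between _ _ _).1 (hd l hl)
    exact Set.disjoint_left.1 (ht.monotone.pairwise_disjoint_on_Ioo_succ hij)
      (mem_Ioo (by simp)) (mem_Ioo (by simp))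

end Forking

theorem remark_2_5_i_general
    (Mb : Type) [LO.Structure Mb] (hMb : Mb ⊨ LO.completeTheory ℚ)
    (κ : Cardinal.{0}) (hκ : 1 < κ) (hsat : Saturated LO Mb κ)
    (a b : Mb) (hab : ltM a b) (hca : ∀ n : ℕ, ltM (constM n) a) :
    TpEq LO (fun _ : Fin 1 => a) (fun _ : Fin 1 => b) ∧
    IsolatedOver LO (fun _ : Fin 1 => b) (fun _ : Fin 1 => a) ∧
    ¬ IsolatedOver LO (fun _ : Fin 1 => a) (fun _ : Fin 1 => b) ∧
    ¬ ForksOver (Tp LO (Set.range fun _ : Fin 1 => b) (fun _ : Fin 1 => a)) ∅ ∧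
    ¬ ForksOver (Tp LO (Set.range fun _ : Fin 1 => a) (fun _ : Fin 1 => b)) ∅ ∧
    ∀ a' b' c' : Mb, TpEq LO ![a', b'] ![a, b] → TpEq LO ![b', c'] ![a, b] →
      ForksOver (Tp LO ({a', c'} : Set Mb) (fun _ : Fin 1 => b')) ∅ := by
  let := modelOrder Mb
  have := ehrenfeuchtOrder_modelOrder Mb
  have hab : a < b := hab
  have ha : IsInfinite a := hca
  refine ⟨tpEq_of_isInfinite ha (ha.mono hab.le), isolatedOver_of_lt ha hab,
    not_isolatedOver_of_lt ha hab, not_forksOver_tp_left hκ hsat ha hab,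
    not_forksOver_tp_right ha hab, fun a' b' c' hab' hbc' => ?_⟩
  have ⟨ha', hab'⟩ := (tpEq_pair_iff hab ha).1 hab'
  exact forksOver_tp_between ha' hab' ((tpEq_pair_iff hab ha).1 hbc').2

/-- **Remark 2.5 (i).** In a monster model of `Th(ℚ, <, (n)_{n<ω})` (the
Ehrenfeucht example), if `c_n < a < b` for all `n`, then `tp(a) = tp(b)`,
`tp(b/a)` is isolated, `tp(a/b)` is not isolated, neither forks over `∅`, and
whenever `tp(a', b') = tp(b', c') = tp(a, b)` the type `tp(b'/a'c')` forks over
`∅`. -/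
theorem remark_2_5_i
    (Mb : Type) [LO.Structure Mb] (hMb : Mb ⊨ LO.completeTheory ℚ)
    (κ : Cardinal.{0}) (hκ : LO.card + ℵ₀ < κ)
    (hsat : Saturated LO Mb κ) (hhom : StronglyHomogeneous LO Mb κ)
    (a b : Mb) (hab : ltM a b) (hca : ∀ n : ℕ, ltM (constM n) a) :
    TpEq LO (fun _ : Fin 1 => a) (fun _ : Fin 1 => b) ∧
    IsolatedOver LO (fun _ : Fin 1 => b) (fun _ : Fin 1 => a) ∧
    ¬ IsolatedOver LO (fun _ : Fin 1 => a) (fun _ : Fin 1 => b) ∧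
    ¬ ForksOver (Tp LO (Set.range fun _ : Fin 1 => b) (fun _ : Fin 1 => a)) ∅ ∧
    ¬ ForksOver (Tp LO (Set.range fun _ : Fin 1 => a) (fun _ : Fin 1 => b)) ∅ ∧
    ∀ a' b' c' : Mb, TpEq LO ![a', b'] ![a, b] → TpEq LO ![b', c'] ![a, b] →
      ForksOver (Tp LO ({a', c'} : Set Mb) (fun _ : Fin 1 => b')) ∅ := by
  exact remark_2_5_i_general Mb hMb κ
    ((one_lt_aleph0.trans_le (self_le_add_left _ _)).trans hκ) hsat a b hab hca

end KimPaper
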